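/- For every γ > 0 there exists μ > 0 such that for every Δ ∈ ℕ there exists n₀ ∈ ℕ such that for every even n ≥ n₀ the following holds: let G be a graph on n vertices with minimum degree δ(G) ≥ (1 − 1/(2Δ) + γ)n, and let H be a balanced bipartite graph on n vertices with maximum degree Δ(H) ≤ Δ. Then for every proper (μn/Δ²)-bounded edge colouring χ of G there exists a subgraph of G isomorphic to H that is rainbow with respect to χ. -/

import Mathlib

/-!
Take a uniformly random spanning copy of `H` in `G`. The degree condition leaves, for every
bijection and every vertex `w` of `H`, at least `c = γn` vertices whose images can be exchanged
with that of `w` without spoiling an edge. Releasing `k` prescribed images one at a time by such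
exchanges shows that a partial assignment of size `k` is extended with probability at most `c⁻ᵏ`.
An exchange cannot complete an assignment disjoint from the released pair, so this bound survives
conditioning on avoiding any family of non-overlapping assignments, which is the hypothesis of the
lopsided Lovász local lemma. The copy is rainbow once it avoids the size `4` assignments that put
two edges on two disjoint edges of one colour; each overlaps `O(Δ²n³K)` others when colour classes
have size at most `K`, and this is below `c⁴ / 4` once `K ≤ γ⁴n / (128Δ²)`.
-/

open Finset MeasureTheory

section LocalLemma

variable {Ω ι : Type*} [MeasurableSpace Ω] {μ : Measure Ω} [IsFiniteMeasure μ]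

theorem measureReal_le_inter_biInter_compl_add_sum (A : ι → Set Ω) (S : Finset ι) (B : Set Ω) :
    μ.real B ≤ μ.real (B ∩ ⋂ i ∈ S, (A i)ᶜ) + ∑ i ∈ S, μ.real (A i ∩ B) := by
  have hcover : B ⊆ (B ∩ ⋂ i ∈ S, (A i)ᶜ) ∪ ⋃ i ∈ S, A i ∩ B := by
    intro x hx
    by_cases h : ∃ i ∈ S, x ∈ A i
    · obtain ⟨i, hi, hxi⟩ := h
      exact Or.inr (Set.mem_biUnion hi ⟨hxi, hx⟩)
    · push Not at h
      exact Or.inl ⟨hx, Set.mem_iInter₂.2 h⟩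
  calc μ.real B ≤ μ.real ((B ∩ ⋂ i ∈ S, (A i)ᶜ) ∪ ⋃ i ∈ S, A i ∩ B) := measureReal_mono hcover
    _ ≤ μ.real (B ∩ ⋂ i ∈ S, (A i)ᶜ) + μ.real (⋃ i ∈ S, A i ∩ B) := measureReal_union_le _ _
    _ ≤ μ.real (B ∩ ⋂ i ∈ S, (A i)ᶜ) + ∑ i ∈ S, μ.real (A i ∩ B) := by
      gcongr
      exact measureReal_biUnion_finset_le _ _

variable {A : ι → Set Ω} {I : Finset ι} {N : ι → Finset ι} {p : ℝ} {d : ℕ}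

theorem measureReal_le_two_mul_inter_biInter_compl {S : Finset ι} {B : Set Ω} (hp : 0 ≤ p)
    (hS : #S ≤ d) (hpd : 4 * p * d ≤ 1) (hA : ∀ i ∈ S, μ.real (A i ∩ B) ≤ 2 * p * μ.real B) :
    μ.real B ≤ 2 * μ.real (B ∩ ⋂ i ∈ S, (A i)ᶜ) := by
  have hsum : ∑ i ∈ S, μ.real (A i ∩ B) ≤ μ.real B / 2 :=
    calc ∑ i ∈ S, μ.real (A i ∩ B)
        ≤ #S * (2 * p * μ.real B) := by
          simpa only [nsmul_eq_mul] using sum_le_card_nsmul _ _ _ hA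
      _ ≤ d * (2 * p * μ.real B) := by gcongr
      _ = 4 * p * d * (μ.real B / 2) := by ring
      _ ≤ 1 * (μ.real B / 2) := by gcongr
      _ = μ.real B / 2 := one_mul _
  linarith [measureReal_le_inter_biInter_compl_add_sum (μ := μ) A S B]

theorem measureReal_inter_biInter_compl_le_of_lopsided (hp : 0 ≤ p)
    (hA : ∀ i ∈ I, ∀ S ⊆ I, Disjoint S (N i) →
      μ.real (A i ∩ ⋂ j ∈ S, (A j)ᶜ) ≤ p * μ.real (⋂ j ∈ S, (A j)ᶜ))
    (hN : ∀ i ∈ I, #(N i) ≤ d) (hpd : 4 * p * d ≤ 1) {i : ι} (hi : i ∈ I)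
    {S : Finset ι} (hS : S ⊆ I) :
    μ.real (A i ∩ ⋂ j ∈ S, (A j)ᶜ) ≤ 2 * p * μ.real (⋂ j ∈ S, (A j)ᶜ) := by
  classical
  induction S using Finset.strongInduction generalizing i with
  | H S ih =>
  set near := S ∩ N i
  set far := S \ N i
  have hsplit : (⋂ j ∈ S, (A j)ᶜ) = (⋂ j ∈ far, (A j)ᶜ) ∩ ⋂ j ∈ near, (A j)ᶜ := by
    rw [← set_biInter_inter far near, sdiff_union_inter]
  have hnear : ∀ k ∈ near, μ.real (A k ∩ ⋂ j ∈ far, (A j)ᶜ) ≤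
      2 * p * μ.real (⋂ j ∈ far, (A j)ᶜ) := fun k hk =>
    ih far (ssubset_iff_of_subset sdiff_subset |>.2 ⟨k, by grind⟩)
      (hS (mem_inter.1 hk).1) (sdiff_subset.trans hS)
  have hfar : μ.real (⋂ j ∈ far, (A j)ᶜ) ≤ 2 * μ.real (⋂ j ∈ S, (A j)ᶜ) := by
    rw [hsplit]
    exact measureReal_le_two_mul_inter_biInter_compl hp
      ((card_le_card inter_subset_right).trans (hN i hi)) hpd hnear
  calc μ.real (A i ∩ ⋂ j ∈ S, (A j)ᶜ)
      ≤ μ.real (A i ∩ ⋂ j ∈ far, (A j)ᶜ) := by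
        rw [hsplit]
        exact measureReal_mono (Set.inter_subset_inter_right _ Set.inter_subset_left)
    _ ≤ p * μ.real (⋂ j ∈ far, (A j)ᶜ) :=
        hA i hi far (sdiff_subset.trans hS) sdiff_disjoint
    _ ≤ p * (2 * μ.real (⋂ j ∈ S, (A j)ᶜ)) := by gcongr
    _ = 2 * p * μ.real (⋂ j ∈ S, (A j)ᶜ) := by ring

theorem measureReal_biInter_compl_pos_of_lopsided [NeZero μ] (hp : 0 ≤ p)
    (hA : ∀ i ∈ I, ∀ S ⊆ I, Disjoint S (N i) →
      μ.real (A i ∩ ⋂ j ∈ S, (A j)ᶜ) ≤ p * μ.real (⋂ j ∈ S, (A j)ᶜ))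
    (hN : ∀ i ∈ I, #(N i) ≤ d) (hpd : 4 * p * d ≤ 1) (hp4 : 4 * p ≤ 1) :
    0 < μ.real (⋂ i ∈ I, (A i)ᶜ) := by
  classical
  suffices h : ∀ S ⊆ I, 0 < μ.real (⋂ i ∈ S, (A i)ᶜ) from h I Subset.rfl
  intro S hS
  induction S using Finset.induction_on with
  | empty => simp [measureReal_univ_pos]
  | insert i S _ ih =>
    obtain ⟨hi, hS⟩ := insert_subset_iff.1 hS
    have hunion := measureReal_le_inter_biInter_compl_add_sum (μ := μ) A {i} (⋂ j ∈ S, (A j)ᶜ)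
    rw [set_biInter_singleton, sum_singleton, Set.inter_comm (⋂ j ∈ S, _),
      ← set_biInter_insert i S fun j => (A j)ᶜ] at hunion
    have hcond := measureReal_inter_biInter_compl_le_of_lopsided hp hA hN hpd hi hS
    nlinarith [ih hS]

theorem exists_mem_forall_notMem_of_lopsided {Ω : Type*} [Finite Ω] {A : ι → Set Ω} {Y : Set Ω}
    {q : ℕ} (hY : Y.Nonempty)
    (hA : ∀ i ∈ I, ∀ S ⊆ I, Disjoint S (N i) →
      q * (Y ∩ (⋂ j ∈ S, (A j)ᶜ) ∩ A i).ncard ≤ (Y ∩ ⋂ j ∈ S, (A j)ᶜ).ncard)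
    (hN : ∀ i ∈ I, #(N i) ≤ d) (hd : 4 * d ≤ q) (hq : 4 ≤ q) :
    ∃ x ∈ Y, ∀ i ∈ I, x ∉ A i := by
  let _ : MeasurableSpace Ω := ⊤
  let μ : Measure Ω := Measure.count.restrict Y
  have hμ (s : Set Ω) : μ.real s = (Y ∩ s).ncard := by
    rw [measureReal_restrict_apply .of_discrete, measureReal_def, Measure.count_apply .of_discrete,
      Set.inter_comm, ← (Set.toFinite _).cast_ncard_eq, ENat.toENNReal_coe, ENNReal.toReal_natCast]
  have : NeZero μ := by
    rw [neZero_iff, Ne, Measure.restrict_eq_zero, Measure.count_eq_zero_iff]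
    exact hY.ne_empty
  have hq0 : (0 : ℝ) < q := mod_cast (by lia : 0 < q)
  have hpos : 0 < μ.real (⋂ i ∈ I, (A i)ᶜ) := by
    refine measureReal_biInter_compl_pos_of_lopsided (p := (q : ℝ)⁻¹) (by positivity) ?_ hN ?_ ?_
    · intro i hi S hS hSN
      rw [hμ, hμ, inv_mul_eq_div, le_div_iff₀' hq0, Set.inter_comm (A i), ← Set.inter_assoc]
      exact_mod_cast hA i hi S hS hSN
    · rw [mul_right_comm, ← div_eq_mul_inv, div_le_one hq0]
      exact_mod_cast hd
    · rw [← div_eq_mul_inv, div_le_one hq0]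
      exact_mod_cast hq
  rw [hμ, Nat.cast_pos, Set.ncard_pos] at hpos
  obtain ⟨x, hxY, hx⟩ := hpos
  exact ⟨x, hxY, Set.mem_iInter₂.1 hx⟩

end LocalLemma

section Switching

variable {V W : Type*}

/-- The bijections embedding `H` in `G` as a spanning subgraph, i.e. sending edges to edges. -/
def spanningCopies (G : SimpleGraph V) (H : SimpleGraph W) : Set (W ≃ V) :=
  {φ | H ≤ G.comap φ}

/-- The event that a bijection extends the partial assignment `T`, given by its graph. Nothing
requires `T` to be functional; if it is not, the event is empty. -/
def extensionsOf (T : Finset (W × V)) : Set (W ≃ V) :=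
  {φ | ∀ r ∈ T, φ r.1 = r.2}

/-- Two partial assignments overlap if they share a domain vertex or a target vertex. This is the
dependency relation for the local lemma. -/
def Overlaps (S T : Finset (W × V)) : Prop :=
  ∃ r ∈ S, ∃ q ∈ T, r.1 = q.1 ∨ r.2 = q.2

instance [DecidableEq V] [DecidableEq W] : DecidableRel (Overlaps (V := V) (W := W)) :=
  fun S T => inferInstanceAs (Decidable (∃ r ∈ S, ∃ q ∈ T, r.1 = q.1 ∨ r.2 = q.2))

/-- The spanning copies of `H` in `G` that extend no assignment from `𝓔`. -/
def copiesAvoiding (G : SimpleGraph V) (H : SimpleGraph W) (𝓔 : Set (Finset (W × V))) :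
    Set (W ≃ V) :=
  spanningCopies G H ∩ ⋂ E ∈ 𝓔, (extensionsOf E)ᶜ

variable [DecidableEq W]

/-- The vertices `u` such that exchanging the images of `w` and `u` under `φ` sends every edge of
`H` at `w` or `u` to an edge of `G`. -/
def switchable (G : SimpleGraph V) (H : SimpleGraph W) (φ : W ≃ V) (w : W) : Set W :=
  {u | ∀ x y, H.Adj x y → x = w ∨ x = u →
    G.Adj (φ (Equiv.swap w u x)) (φ (Equiv.swap w u y))}

variable {G : SimpleGraph V} {H : SimpleGraph W} {φ : W ≃ V} {u w : W} {v : V}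

theorem adj_swap_of_mem_switchable (hu : u ∈ switchable G H φ w) {x y : W} (hxy : H.Adj x y)
    (h : G.Adj (φ x) (φ y)) : G.Adj (φ (Equiv.swap w u x)) (φ (Equiv.swap w u y)) := by
  by_cases hx : x = w ∨ x = u
  · exact hu x y hxy hx
  by_cases hy : y = w ∨ y = u
  · exact (hu y x hxy.symm hy).symm
  push Not at hx hy
  rwa [Equiv.swap_apply_of_ne_of_ne hx.1 hx.2, Equiv.swap_apply_of_ne_of_ne hy.1 hy.2]

theorem swap_trans_mem_spanningCopies (hφ : φ ∈ spanningCopies G H)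
    (hu : u ∈ switchable G H φ w) : (Equiv.swap w u).trans φ ∈ spanningCopies G H :=
  fun _ _ hxy => adj_swap_of_mem_switchable hu hxy (hφ hxy)

theorem mem_switchable_of_forall_adj (hw : ∀ x, H.Adj w x → G.Adj (φ x) (φ u))
    (hu : ∀ y, H.Adj u y → G.Adj (φ w) (φ y)) : u ∈ switchable G H φ w := by
  have hwu : ¬ H.Adj w u := fun h => (hw u h).ne rfl
  rintro x y hxy (rfl | rfl)
  · have hyu : y ≠ u := by rintro rfl; exact hwu hxy
    rw [Equiv.swap_apply_left, Equiv.swap_apply_of_ne_of_ne hxy.ne' hyu]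
    exact (hw y hxy).symm
  · have hyw : y ≠ w := by rintro rfl; exact hwu hxy.symm
    rw [Equiv.swap_apply_right, Equiv.swap_apply_of_ne_of_ne hyw hxy.ne']
    exact hu y hxy

theorem swap_trans_mem_extensionsOf {T : Finset (W × V)} (hφ : φ ∈ extensionsOf T)
    (hw : ∀ q ∈ T, q.1 ≠ w) (hu : ∀ q ∈ T, q.1 ≠ u) :
    (Equiv.swap w u).trans φ ∈ extensionsOf T := fun q hq => by
  rw [Equiv.trans_apply, Equiv.swap_apply_of_ne_of_ne (hw q hq) (hu q hq), hφ q hq]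

theorem mem_extensionsOf_of_swap_trans_mem {E : Finset (W × V)} (hφ : φ w = v)
    (hE : ¬ Overlaps {(w, v)} E) (h : (Equiv.swap w u).trans φ ∈ extensionsOf E) :
    φ ∈ extensionsOf E := by
  intro q hq
  have hq' : w ≠ q.1 ∧ v ≠ q.2 := by
    constructor <;> intro h <;> exact hE ⟨_, mem_singleton_self _, q, hq, by simp [h]⟩
  have hval : φ (Equiv.swap w u q.1) = q.2 := h q hq
  have hqu : q.1 ≠ u := by
    rintro rfl
    rw [Equiv.swap_apply_right] at hval
    exact hq'.2 (hφ.symm.trans hval)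
  rwa [Equiv.swap_apply_of_ne_of_ne hq'.1.symm hqu] at hval

theorem swap_trans_mem_copiesAvoiding {𝓔 : Set (Finset (W × V))} (hφ : φ ∈ copiesAvoiding G H 𝓔)
    (hu : u ∈ switchable G H φ w) (hw : φ w = v) (h𝓔 : ∀ E ∈ 𝓔, ¬ Overlaps {(w, v)} E) :
    (Equiv.swap w u).trans φ ∈ copiesAvoiding G H 𝓔 :=
  ⟨swap_trans_mem_spanningCopies hφ.1 hu, Set.mem_iInter₂.2 fun E hE h =>
    Set.mem_iInter₂.1 hφ.2 E hE (mem_extensionsOf_of_swap_trans_mem hw (h𝓔 E hE) h)⟩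

theorem eq_and_eq_of_swap_trans_eq {φ' : W ≃ V} {u' : W} (hφ : φ w = φ' w)
    (h : (Equiv.swap w u).trans φ = (Equiv.swap w u').trans φ') : φ = φ' ∧ u = u' := by
  have hu : u = u' := by
    apply ((Equiv.swap w u).trans φ).injective
    conv_rhs => rw [h]
    simp [hφ]
  subst hu
  exact ⟨Equiv.ext fun x => by simpa using DFunLike.congr_fun h (Equiv.swap w u x), rfl⟩

theorem le_ncard_switchable_diff [Finite W] {c : ℕ} {T : Finset (W × V)}
    (hswitch : c + #T ≤ (switchable G H φ w).ncard) :
    c ≤ (switchable G H φ w \ Prod.fst '' (T : Set (W × V))).ncard := by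
  have hdomain : (Prod.fst '' (T : Set (W × V))).ncard ≤ #T :=
    (Set.ncard_image_le T.finite_toSet).trans_eq (Set.ncard_coe_finset T)
  have hdiff := Set.le_ncard_sdiff (Prod.fst '' (T : Set (W × V))) (switchable G H φ w)
  lia

theorem mul_ncard_inter_extensionsOf_insert_le [Finite W] [DecidableEq V] {c : ℕ}
    {𝓔 : Set (Finset (W × V))} {T : Finset (W × V)}
    (hswitch : ∀ φ : W ≃ V, c + #T ≤ (switchable G H φ w).ncard) (hwv : (w, v) ∉ T)
    (h𝓔 : ∀ E ∈ 𝓔, ¬ Overlaps {(w, v)} E) :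
    c * (copiesAvoiding G H 𝓔 ∩ extensionsOf (insert (w, v) T)).ncard ≤
      (copiesAvoiding G H 𝓔 ∩ extensionsOf T).ncard := by
  set X := copiesAvoiding G H 𝓔 ∩ extensionsOf (insert (w, v) T)
  set Y := copiesAvoiding G H 𝓔 ∩ extensionsOf T
  let U (φ : W ≃ V) : Set W := switchable G H φ w \ Prod.fst '' (T : Set (W × V))
  have hX : ∀ φ ∈ X, φ w = v := fun φ hφ => hφ.2 (w, v) (mem_insert_self _ _)
  have hswap : ∀ φ ∈ X, ∀ u ∈ U φ, (Equiv.swap w u).trans φ ∈ Y := by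
    intro φ hφ u hu
    have hφT : ∀ q ∈ T, φ q.1 = q.2 := fun q hq => hφ.2 q (mem_insert_of_mem hq)
    refine ⟨swap_trans_mem_copiesAvoiding hφ.1 hu.1 (hX φ hφ) h𝓔,
      swap_trans_mem_extensionsOf hφT ?_ fun q hq hqu => hu.2 ⟨q, hq, hqu⟩⟩
    rintro q hq rfl
    exact hwv (by rwa [← hX φ hφ, hφT q hq])
  -- Each `φ ∈ X` admits at least `c` switches at `w`, and `φ` is recovered from the outcome, as
  -- `φ w = v` is prescribed.
  let f (q : Σ φ : X, U φ) : Y := ⟨_, hswap q.1 q.1.2 q.2 q.2.2⟩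
  have hf : Function.Injective f := by
    rintro ⟨⟨φ, hφ⟩, u, hu⟩ ⟨⟨φ', hφ'⟩, u', hu'⟩ h
    obtain ⟨rfl, rfl⟩ :=
      eq_and_eq_of_swap_trans_eq ((hX φ hφ).trans (hX φ' hφ').symm) (congrArg Subtype.val h)
    rfl
  have := Fintype.ofFinite X
  calc c * X.ncard = ∑ _φ : X, c := by
        rw [sum_const, smul_eq_mul, mul_comm, card_univ, ← Nat.card_eq_fintype_card,
          Nat.card_coe_set_eq]
    _ ≤ ∑ φ : X, (U φ).ncard := sum_le_sum fun φ _ => le_ncard_switchable_diff (hswitch φ)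
    _ = Nat.card (Σ φ : X, U φ) := Nat.card_sigma.symm
    _ ≤ Y.ncard := Nat.card_le_card_of_injective f hf

theorem pow_mul_ncard_inter_extensionsOf_le [Finite W] {c k : ℕ} {𝓔 : Set (Finset (W × V))}
    (hswitch : ∀ (φ : W ≃ V) w, c + k ≤ (switchable G H φ w).ncard) {T : Finset (W × V)}
    (hT : #T ≤ k) (h𝓔 : ∀ E ∈ 𝓔, ¬ Overlaps T E) :
    c ^ #T * (copiesAvoiding G H 𝓔 ∩ extensionsOf T).ncard ≤ (copiesAvoiding G H 𝓔).ncard := by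
  classical
  induction T using Finset.induction_on with
  | empty => simp [extensionsOf]
  | insert r T hr ih =>
    rw [card_insert_of_notMem hr] at hT ⊢
    have hstep : c * (copiesAvoiding G H 𝓔 ∩ extensionsOf (insert r T)).ncard ≤
        (copiesAvoiding G H 𝓔 ∩ extensionsOf T).ncard :=
      mul_ncard_inter_extensionsOf_insert_le (fun φ => (by lia : _ ≤ c + k).trans (hswitch φ r.1))
        hr fun E hE ⟨q, hq, h⟩ => h𝓔 E hE ⟨q, by simp_all, h⟩
    calc c ^ (#T + 1) * (copiesAvoiding G H 𝓔 ∩ extensionsOf (insert r T)).ncard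
        = c ^ #T * (c * (copiesAvoiding G H 𝓔 ∩ extensionsOf (insert r T)).ncard) := by ring
      _ ≤ c ^ #T * (copiesAvoiding G H 𝓔 ∩ extensionsOf T).ncard := by gcongr
      _ ≤ (copiesAvoiding G H 𝓔).ncard :=
        ih (by lia) fun E hE ⟨q, hq, h⟩ => h𝓔 E hE ⟨q, mem_insert_of_mem hq, h⟩

theorem spanningCopies_nonempty_of_switchable [Finite W] [Nonempty (W ≃ V)]
    (hswitch : ∀ (φ : W ≃ V) w, (switchable G H φ w).Nonempty) :
    (spanningCopies G H).Nonempty := by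
  -- A bijection spoiling the fewest edges spoils none, since a switch would repair one.
  let spoiled (φ : W ≃ V) : Set (W × W) := {e | H.Adj e.1 e.2 ∧ ¬ G.Adj (φ e.1) (φ e.2)}
  obtain ⟨φ, hφ⟩ := Finite.exists_min fun φ : W ≃ V => (spoiled φ).ncard
  refine ⟨φ, fun w x hwx => ?_⟩
  by_contra hbad
  obtain ⟨u, hu⟩ := hswitch φ w
  refine (hφ ((Equiv.swap w u).trans φ)).not_gt (Set.ncard_lt_ncard ?_)
  have hsub : spoiled ((Equiv.swap w u).trans φ) ⊆ spoiled φ := fun e he =>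
    ⟨he.1, mt (adj_swap_of_mem_switchable hu he.1) he.2⟩
  exact (Set.ssubset_iff_of_subset hsub).2
    ⟨(w, x), ⟨hwx, hbad⟩, fun h => h.2 (hu w x hwx (Or.inl rfl))⟩

theorem exists_spanningCopy_forall_notMem_extensionsOf [Finite W] [DecidableEq V]
    [Nonempty (W ≃ V)] {c k d : ℕ}
    (hswitch : ∀ (φ : W ≃ V) w, c + k ≤ (switchable G H φ w).ncard)
    (𝓔 : Finset (Finset (W × V))) (hcard : ∀ E ∈ 𝓔, #E = k)
    (hdeg : ∀ E ∈ 𝓔, #{F ∈ 𝓔 | Overlaps E F} ≤ d) (hc : 4 ≤ c ^ k) (hd : 4 * d ≤ c ^ k) :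
    ∃ φ ∈ spanningCopies G H, ∀ E ∈ 𝓔, φ ∉ extensionsOf E := by
  have hcopies : (spanningCopies G H).Nonempty :=
    spanningCopies_nonempty_of_switchable fun φ w =>
      Set.nonempty_of_ncard_ne_zero fun h => by
        obtain ⟨rfl, rfl⟩ : c = 0 ∧ k = 0 := by have := hswitch φ w; lia
        simp at hc
  refine exists_mem_forall_notMem_of_lopsided (N := fun E => {F ∈ 𝓔 | Overlaps E F}) hcopies ?_
    hdeg hd hc
  intro E hE S hS hdisj
  have havoid : ∀ F ∈ (S : Set _), ¬ Overlaps E F := fun F hF hEF =>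
    disjoint_left.1 hdisj hF (mem_filter.2 ⟨hS hF, hEF⟩)
  rw [← hcard E hE]
  exact pow_mul_ncard_inter_extensionsOf_le hswitch (hcard E hE).le havoid

end Switching

section DegreeConditions

variable {V W : Type*} [Fintype V] [Fintype W] {G : SimpleGraph V}
  {H : SimpleGraph W} [DecidableRel G.Adj] [DecidableRel H.Adj]

theorem card_filter_not_adj_le {m : ℕ} {v : V} (hG : Fintype.card V ≤ G.degree v + m)
    (φ : W ≃ V) : #{w : W | ¬ G.Adj v (φ w)} ≤ m := by
  classical
  have hmap : ({w : W | ¬ G.Adj v (φ w)} : Finset W).map φ.toEmbedding =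
      (G.neighborFinset v)ᶜ := by
    ext x
    simp
  rw [← card_map φ.toEmbedding, hmap, card_compl, G.card_neighborFinset_eq_degree]
  lia

theorem card_le_add_ncard_switchable [DecidableEq W] {Δ m : ℕ}
    (hG : ∀ v, Fintype.card V ≤ G.degree v + m) (hH : ∀ w, H.degree w ≤ Δ) (φ : W ≃ V) (w : W) :
    Fintype.card W ≤ 2 * Δ * m + (switchable G H φ w).ncard := by
  classical
  let nonNbrs (v : V) : Finset W := {u | ¬ G.Adj v (φ u)}
  let badForW : Finset W := (H.neighborFinset w).biUnion fun x => nonNbrs (φ x)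
  let badForU : Finset W := (nonNbrs (φ w)).biUnion fun u => H.neighborFinset u
  have hnonNbrs (v : V) : #(nonNbrs v) ≤ m := card_filter_not_adj_le (hG v) φ
  have hbadForW : #badForW ≤ Δ * m :=
    (card_biUnion_le_card_mul _ _ m fun x _ => hnonNbrs (φ x)).trans
      (Nat.mul_le_mul_right _ (hH w))
  have hbadForU : #badForU ≤ m * Δ :=
    (card_biUnion_le_card_mul _ _ Δ fun x _ => hH x).trans
      (Nat.mul_le_mul_right _ (hnonNbrs (φ w)))
  have hcover : (Set.univ : Set W) ⊆ ↑(badForW ∪ badForU) ∪ switchable G H φ w := by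
    intro u _
    by_cases h : u ∈ badForW ∪ badForU
    · exact Or.inl h
    simp only [badForW, badForU, nonNbrs, mem_union, mem_biUnion, SimpleGraph.mem_neighborFinset,
      mem_filter, mem_univ, true_and, not_or, not_exists, not_and, not_not] at h
    refine Or.inr (mem_switchable_of_forall_adj h.1 fun y hy => ?_)
    by_contra hwy
    exact h.2 y hwy hy.symm
  calc Fintype.card W = (Set.univ : Set W).ncard := by
        rw [Set.ncard_univ, Nat.card_eq_fintype_card]
    _ ≤ (↑(badForW ∪ badForU) ∪ switchable G H φ w).ncard := Set.ncard_le_ncard hcover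
    _ ≤ #(badForW ∪ badForU) + (switchable G H φ w).ncard := by
        simpa only [Set.ncard_coe_finset] using
          Set.ncard_union_le (↑(badForW ∪ badForU)) (switchable G H φ w)
    _ ≤ #badForW + #badForU + (switchable G H φ w).ncard := by gcongr; exact card_union_le _ _
    _ ≤ 2 * Δ * m + (switchable G H φ w).ncard := by linarith

theorem card_dart_le_mul {Δ : ℕ} (hH : ∀ w, H.degree w ≤ Δ) :
    Fintype.card H.Dart ≤ Δ * Fintype.card W := by
  rw [H.dart_card_eq_sum_degrees, mul_comm, ← card_univ, ← smul_eq_mul]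
  exact sum_le_card_nsmul _ _ _ fun w _ => hH w

theorem card_filter_dart_incident_le [DecidableEq W] (w : W) :
    #{d : H.Dart | d.fst = w ∨ d.snd = w} ≤ 2 * H.degree w := by
  have hfst : #{d : H.Dart | d.fst = w} = H.degree w := H.dart_fst_fiber_card_eq_degree w
  have hsnd : #{d : H.Dart | d.snd = w} = #{d : H.Dart | d.fst = w} :=
    card_bijective _ SimpleGraph.Dart.symm_involutive.bijective fun d => by simp
  calc #{d : H.Dart | d.fst = w ∨ d.snd = w}
      ≤ #{d : H.Dart | d.fst = w} + #{d : H.Dart | d.snd = w} := by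
        rw [filter_or]; exact card_union_le _ _
    _ = 2 * H.degree w := by rw [hsnd, hfst, two_mul]

theorem card_filter_dart_color_le {κ : Type*} [DecidableEq κ] (χ : Sym2 W → κ) (c : κ) :
    #{d : H.Dart | χ d.edge = c} ≤ 2 * {e | e ∈ H.edgeSet ∧ χ e = c}.ncard := by
  classical
  have himage : (({d : H.Dart | χ d.edge = c} : Finset H.Dart).image SimpleGraph.Dart.edge :
      Set (Sym2 W)) ⊆ {e | e ∈ H.edgeSet ∧ χ e = c} := by
    simp only [coe_image, coe_filter, mem_univ, true_and, Set.image_subset_iff]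
    exact fun d hd => ⟨d.edge_mem, hd⟩
  refine (card_le_mul_card_image (f := SimpleGraph.Dart.edge) _ 2 fun e he => ?_).trans
    (Nat.mul_le_mul_left _ ?_)
  · obtain ⟨d, -, rfl⟩ := mem_image.1 he
    rw [← H.dart_edge_fiber_card d.edge d.edge_mem]
    exact card_le_card (filter_subset_filter _ (subset_univ _))
  · rw [← Set.ncard_coe_finset]
    exact Set.ncard_le_ncard himage

theorem card_filter_snd_color_le {κ : Type*} [DecidableEq κ] {χ : Sym2 V → κ} {Δ K : ℕ}
    (hcard : Fintype.card W = Fintype.card V) (hH : ∀ w, H.degree w ≤ Δ)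
    (hK : ∀ k, {e | e ∈ G.edgeSet ∧ χ e = k}.ncard ≤ K) (k : κ) :
    #{q : H.Dart × G.Dart | χ q.2.edge = k} ≤ 2 * Δ * Fintype.card V * K := by
  have hprod : ({q | χ q.2.edge = k} : Finset (H.Dart × G.Dart)) =
      (univ : Finset H.Dart) ×ˢ ({e | χ e.edge = k} : Finset G.Dart) := by
    ext q
    simp
  calc #{q : H.Dart × G.Dart | χ q.2.edge = k}
      = Fintype.card H.Dart * #{e : G.Dart | χ e.edge = k} := by
        rw [hprod, card_product, card_univ]
    _ ≤ Δ * Fintype.card V * (2 * K) := by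
        gcongr
        · exact hcard ▸ card_dart_le_mul hH
        · exact (card_filter_dart_color_le χ k).trans (Nat.mul_le_mul_left 2 (hK k))
    _ = 2 * Δ * Fintype.card V * K := by ring

end DegreeConditions

section Conflicts

variable {V W κ : Type*} [DecidableEq V] [DecidableEq W] {G : SimpleGraph V} {H : SimpleGraph W}

/-- The partial assignment placing a dart of `H` on a dart of `G`, given by its graph. -/
def dartAssignment (p : H.Dart × G.Dart) : Finset (W × V) :=
  {(p.1.fst, p.2.fst), (p.1.snd, p.2.snd)}

theorem card_dartAssignment (p : H.Dart × G.Dart) : #(dartAssignment p) = 2 :=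
  card_pair fun h => p.1.adj.ne (congrArg Prod.fst h)

variable [Fintype V] [Fintype W] [DecidableEq κ] [DecidableRel G.Adj] [DecidableRel H.Adj]

variable (G H) in
/-- The partial assignments placing two disjoint edges of `H` on two disjoint edges of `G` of the
same colour under `χ`: the configurations that a rainbow copy has to avoid. Edges are represented
by darts to record which endpoint goes where. -/
def conflicts (χ : Sym2 V → κ) : Finset (Finset (W × V)) :=
  ({c : (H.Dart × G.Dart) × (H.Dart × G.Dart) | χ c.1.2.edge = χ c.2.2.edge ∧
    ¬ Overlaps (dartAssignment c.1) (dartAssignment c.2)} : Finset _).image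
    fun c => dartAssignment c.1 ∪ dartAssignment c.2

variable {χ : Sym2 V → κ} {E : Finset (W × V)}

theorem card_of_mem_conflicts (hE : E ∈ conflicts G H χ) : #E = 4 := by
  obtain ⟨c, hc, rfl⟩ := mem_image.1 hE
  have hdisj : Disjoint (dartAssignment c.1) (dartAssignment c.2) :=
    disjoint_left.2 fun r hr hr' => (mem_filter.1 hc).2.2 ⟨r, hr, r, hr', Or.inl rfl⟩
  rw [card_union_of_disjoint hdisj, card_dartAssignment, card_dartAssignment]

theorem injOn_color_map_of_forall_notMem_extensionsOf
    (hχ : ∀ e ∈ G.edgeSet, ∀ f ∈ G.edgeSet, e ≠ f → (∃ v, v ∈ e ∧ v ∈ f) → χ e ≠ χ f)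
    {φ : W ≃ V} (hφ : φ ∈ spanningCopies G H) (havoid : ∀ E ∈ conflicts G H χ, φ ∉ extensionsOf E) :
    Set.InjOn (fun e => χ (e.map φ)) H.edgeSet := by
  intro e he f hf hef
  by_contra hne
  let place (d : H.Dart) : H.Dart × G.Dart := (d, ⟨(φ d.fst, φ d.snd), hφ d.adj⟩)
  have hext (d : H.Dart) : ∀ r ∈ dartAssignment (place d), φ r.1 = r.2 := by
    simp [dartAssignment, place]
  have hmem (d : H.Dart) : ∀ r ∈ dartAssignment (place d), r.2 ∈ d.edge.map φ := by
    simp [dartAssignment, place, SimpleGraph.Dart.edge]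
  have hdart : ∀ e ∈ H.edgeSet, ∃ d : H.Dart, d.edge = e := by
    rintro ⟨x, y⟩ hxy
    exact ⟨⟨(x, y), hxy⟩, rfl⟩
  obtain ⟨d, rfl⟩ := hdart e he
  obtain ⟨d', rfl⟩ := hdart f hf
  have hdisj : ¬ Overlaps (dartAssignment (place d)) (dartAssignment (place d')) := by
    rintro ⟨r, hr, q, hq, hrq⟩
    have hrq : r.2 = q.2 := hrq.elim (fun h => by rw [← hext d r hr, ← hext d' q hq, h]) id
    exact hχ _ (place d).2.edge_mem _ (place d').2.edge_mem
      ((Sym2.map.injective φ.injective).ne hne) ⟨r.2, hmem d r hr, hrq ▸ hmem d' q hq⟩ hef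
  refine havoid _ (mem_image_of_mem _ (mem_filter.2 ⟨mem_univ (place d, place d'), hef, hdisj⟩)) ?_
  intro r hr
  exact (mem_union.1 hr).elim (hext d r) (hext d' r)

variable {Δ K : ℕ}

theorem card_filter_overlaps_singleton_dartAssignment_le (hcard : Fintype.card W = Fintype.card V)
    (hH : ∀ w, H.degree w ≤ Δ) (r : W × V) :
    #{p : H.Dart × G.Dart | Overlaps {r} (dartAssignment p)} ≤ 4 * Δ * Fintype.card V ^ 2 := by
  have hdeg (v : V) : G.degree v ≤ Fintype.card V := (G.degree_lt_card_verts v).le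
  have hsub : ({p | Overlaps {r} (dartAssignment p)} : Finset (H.Dart × G.Dart)) ⊆
      ({d | d.fst = r.1 ∨ d.snd = r.1} : Finset H.Dart) ×ˢ (univ : Finset G.Dart) ∪
        (univ : Finset H.Dart) ×ˢ ({e | e.fst = r.2 ∨ e.snd = r.2} : Finset G.Dart) := by
    intro p
    simp only [Overlaps, dartAssignment, mem_filter, mem_univ, mem_singleton, mem_insert,
      mem_union, mem_product, true_and, and_true]
    grind
  calc #{p : H.Dart × G.Dart | Overlaps {r} (dartAssignment p)}
      ≤ #{d : H.Dart | d.fst = r.1 ∨ d.snd = r.1} * Fintype.card G.Dart +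
          Fintype.card H.Dart * #{e : G.Dart | e.fst = r.2 ∨ e.snd = r.2} := by
        refine (card_le_card hsub).trans ((card_union_le _ _).trans_eq ?_)
        rw [card_product, card_product, card_univ, card_univ]
    _ ≤ 2 * Δ * (Fintype.card V * Fintype.card V) +
          Δ * Fintype.card V * (2 * Fintype.card V) := by
        gcongr
        · exact (card_filter_dart_incident_le r.1).trans (Nat.mul_le_mul_left 2 (hH r.1))
        · exact card_dart_le_mul hdeg
        · exact hcard ▸ card_dart_le_mul hH
        · exact (card_filter_dart_incident_le r.2).trans (Nat.mul_le_mul_left 2 (hdeg r.2))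
    _ = 4 * Δ * Fintype.card V ^ 2 := by ring

theorem card_filter_overlaps_dartAssignment_le (hcard : Fintype.card W = Fintype.card V)
    (hH : ∀ w, H.degree w ≤ Δ) :
    #{p : H.Dart × G.Dart | Overlaps E (dartAssignment p)} ≤
      #E * (4 * Δ * Fintype.card V ^ 2) := by
  have hsub : ({p | Overlaps E (dartAssignment p)} : Finset (H.Dart × G.Dart)) ⊆
      E.biUnion fun r => {p | Overlaps {r} (dartAssignment p)} := by
    intro p
    simp [Overlaps]
  exact (card_le_card hsub).trans
    (card_biUnion_le_card_mul _ _ _ fun r _ =>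
      card_filter_overlaps_singleton_dartAssignment_le hcard hH r)

theorem card_filter_overlaps_conflicts_le (hcard : Fintype.card W = Fintype.card V)
    (hH : ∀ w, H.degree w ≤ Δ) (hK : ∀ k, {e | e ∈ G.edgeSet ∧ χ e = k}.ncard ≤ K) :
    #{F ∈ conflicts G H χ | Overlaps E F} ≤ 8 * #E * Δ ^ 2 * Fintype.card V ^ 3 * K := by
  have hsub : {F ∈ conflicts G H χ | Overlaps E F} ⊆
      ({p | Overlaps E (dartAssignment p)} : Finset (H.Dart × G.Dart)).biUnion fun p =>
        ({q | χ q.2.edge = χ p.2.edge} : Finset (H.Dart × G.Dart)).image fun q =>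
          dartAssignment p ∪ dartAssignment q := by
    intro F hF
    obtain ⟨hF, hEF⟩ := mem_filter.1 hF
    obtain ⟨⟨p, q⟩, hc, rfl⟩ := mem_image.1 hF
    obtain ⟨hpq, -⟩ := (mem_filter.1 hc).2
    obtain ⟨r, hr, s, hs, hrs⟩ := hEF
    simp only [mem_biUnion, mem_image, mem_filter, mem_univ, true_and]
    rcases mem_union.1 hs with hs | hs
    · exact ⟨p, ⟨r, hr, s, hs, hrs⟩, q, hpq.symm, rfl⟩
    · exact ⟨q, ⟨r, hr, s, hs, hrs⟩, p, hpq, union_comm _ _⟩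
  refine (card_le_card hsub).trans ((card_biUnion_le_card_mul _ _ _ fun p _ =>
    card_image_le.trans (card_filter_snd_color_le hcard hH hK _)).trans ?_)
  calc _ ≤ #E * (4 * Δ * Fintype.card V ^ 2) * (2 * Δ * Fintype.card V * K) := by
        gcongr
        exact card_filter_overlaps_dartAssignment_le hcard hH
    _ = 8 * #E * Δ ^ 2 * Fintype.card V ^ 3 * K := by ring

end Conflicts

section RainbowEmbedding

variable {V W κ : Type*} [Fintype V] [Fintype W] {G : SimpleGraph V} {H : SimpleGraph W}
  {χ : Sym2 V → κ} {Δ : ℕ}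

theorem exists_spanningCopy_injOn_color [DecidableRel G.Adj] [DecidableRel H.Adj] {m c K : ℕ}
    (hcard : Fintype.card W = Fintype.card V) (hG : ∀ v, Fintype.card V ≤ G.degree v + m)
    (hH : ∀ w, H.degree w ≤ Δ) (hm : 2 * Δ * m + c + 4 ≤ Fintype.card V)
    (hχ : ∀ e ∈ G.edgeSet, ∀ f ∈ G.edgeSet, e ≠ f → (∃ v, v ∈ e ∧ v ∈ f) → χ e ≠ χ f)
    (hK : ∀ k, {e | e ∈ G.edgeSet ∧ χ e = k}.ncard ≤ K) (hc : 4 ≤ c ^ 4)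
    (hcK : 128 * Δ ^ 2 * Fintype.card V ^ 3 * K ≤ c ^ 4) :
    ∃ φ ∈ spanningCopies G H, Set.InjOn (fun e => χ (e.map φ)) H.edgeSet := by
  classical
  have : Nonempty (W ≃ V) := Fintype.card_eq.1 hcard
  have hswitch (φ : W ≃ V) (w : W) : c + 4 ≤ (switchable G H φ w).ncard := by
    have := card_le_add_ncard_switchable hG hH φ w
    lia
  have hdeg : ∀ E ∈ conflicts G H χ, #{F ∈ conflicts G H χ | Overlaps E F} ≤
      32 * Δ ^ 2 * Fintype.card V ^ 3 * K := fun E hE =>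
    (card_filter_overlaps_conflicts_le hcard hH hK).trans_eq (by rw [card_of_mem_conflicts hE])
  obtain ⟨φ, hφ, havoid⟩ := exists_spanningCopy_forall_notMem_extensionsOf hswitch
    (conflicts G H χ) (fun _ => card_of_mem_conflicts) hdeg hc (by linarith)
  exact ⟨φ, hφ, injOn_color_map_of_forall_notMem_extensionsOf hχ hφ havoid⟩

theorem ncard_neighborSet_eq_degree [DecidableRel G.Adj] (v : V) :
    (G.neighborSet v).ncard = G.degree v := by
  rw [Set.ncard_eq_toFinset_card', SimpleGraph.degree, SimpleGraph.neighborFinset]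

theorem exists_forall_card_le_degree_add [Nonempty V] [DecidableRel G.Adj] {γ : ℝ} (hγ : 0 ≤ γ)
    (hG : ∀ v, (1 - 1 / (2 * (Δ : ℝ)) + γ) * Fintype.card V ≤ G.degree v) :
    ∃ m : ℕ, (∀ v, Fintype.card V ≤ G.degree v + m) ∧
      2 * Δ * m + 2 * γ * Fintype.card V ≤ Fintype.card V := by
  have hdeg (v : V) : (G.degree v : ℝ) < Fintype.card V := mod_cast G.degree_lt_card_verts v
  have hγΔ : γ < 1 / (2 * Δ) := by
    obtain ⟨v⟩ := ‹Nonempty V›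
    have := lt_of_mul_lt_mul_right (((hG v).trans_lt (hdeg v)).trans_eq (one_mul _).symm)
      (Nat.cast_nonneg _)
    linarith
  have hΔ : (1 : ℝ) ≤ Δ := by
    rw [Nat.one_le_cast, Nat.one_le_iff_ne_zero]
    rintro rfl
    rw [Nat.cast_zero, mul_zero, div_zero] at hγΔ
    exact hγΔ.not_ge hγ
  refine ⟨⌊(1 / (2 * Δ) - γ) * Fintype.card V⌋₊, fun v => ?_, ?_⟩
  · rw [← Nat.sub_le_iff_le_add']
    refine Nat.le_floor ?_
    rw [Nat.cast_sub (mod_cast (hdeg v).le)]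
    linarith [hG v]
  · calc 2 * Δ * (⌊(1 / (2 * Δ) - γ) * Fintype.card V⌋₊ : ℝ) + 2 * γ * Fintype.card V
        ≤ 2 * Δ * ((1 / (2 * Δ) - γ) * Fintype.card V) + 2 * (γ * Δ) * Fintype.card V := by
          gcongr
          · exact Nat.floor_le (mul_nonneg (sub_nonneg.2 hγΔ.le) (Nat.cast_nonneg _))
          · exact le_mul_of_one_le_right hγ hΔ
      _ = Fintype.card V := by field_simp; ring

theorem rainbow_bounded_degree_bipartite_embedding_general {γ : ℝ} (hγ : 0 < γ)
    (hn : 5 ≤ γ * Fintype.card V) (hcard : Fintype.card W = Fintype.card V)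
    (hG : ∀ v, (1 - 1 / (2 * (Δ : ℝ)) + γ) * Fintype.card V ≤ (G.neighborSet v).ncard)
    (hH : ∀ w, (H.neighborSet w).ncard ≤ Δ)
    (hχ : ∀ e ∈ G.edgeSet, ∀ f ∈ G.edgeSet, e ≠ f → (∃ v, v ∈ e ∧ v ∈ f) → χ e ≠ χ f)
    (hK : ∀ k, ({e | e ∈ G.edgeSet ∧ χ e = k}.ncard : ℝ) ≤
      γ ^ 4 / 128 * Fintype.card V / (Δ : ℝ) ^ 2) :
    ∃ φ ∈ spanningCopies G H, Set.InjOn (fun e => χ (e.map φ)) H.edgeSet := by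
  classical
  simp only [ncard_neighborSet_eq_degree] at hG hH
  have : Nonempty V := by
    by_contra! h
    norm_num at hn
  obtain ⟨m, hGm, hm⟩ := exists_forall_card_le_degree_add hγ.le hG
  set n := Fintype.card V
  set c := ⌈γ * n⌉₊
  set K := ⌊γ ^ 4 / 128 * n / (Δ : ℝ) ^ 2⌋₊
  have hγc : γ * n ≤ c := Nat.le_ceil _
  have hcγ : c < γ * n + 1 := Nat.ceil_lt_add_one (by linarith)
  have hc : 4 ≤ c := by exact_mod_cast (by linarith : (4 : ℝ) ≤ c)
  have hmc : 2 * Δ * m + c + 4 ≤ n := by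
    exact_mod_cast (by linarith : 2 * Δ * m + c + 4 ≤ (n : ℝ))
  have hcK : (128 * Δ ^ 2 * n ^ 3 * K : ℝ) ≤ c ^ 4 :=
    calc (128 * Δ ^ 2 * n ^ 3 * K : ℝ)
        ≤ 128 * Δ ^ 2 * n ^ 3 * (γ ^ 4 / 128 * n / (Δ : ℝ) ^ 2) := by
          gcongr
          exact Nat.floor_le (by positivity)
      _ = (γ * n) ^ 4 * ((Δ : ℝ) ^ 2 / (Δ : ℝ) ^ 2) := by ring
      _ ≤ (γ * n) ^ 4 := mul_le_of_le_one_right (by positivity) (div_self_le_one _)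
      _ ≤ c ^ 4 := by gcongr
  exact exists_spanningCopy_injOn_color (K := K) hcard hGm hH hmc hχ
    (fun k => Nat.le_floor (hK k)) (hc.trans (Nat.le_self_pow (by norm_num) _))
    (by exact_mod_cast hcK)

end RainbowEmbedding

/-- For every γ > 0 there exists μ > 0 such that for every Δ ∈ ℕ there is n₀
such that for every even n ≥ n₀: if G is a graph on n vertices with minimum degree at
least (1 − 1/(2Δ) + γ)n and H is a balanced bipartite graph on n vertices with maximum
degree at most Δ, then every proper (μn/Δ²)-bounded edge colouring χ of G admits a
subgraph of G isomorphic to H (an injective homomorphic copy of H) that is rainbow. -/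
theorem rainbow_bounded_degree_bipartite_embedding :
    ∀ γ : ℝ, 0 < γ →
    ∃ μ : ℝ, 0 < μ ∧ ∀ Δ : ℕ, ∃ n₀ : ℕ, ∀ n : ℕ, n₀ ≤ n → Even n →
      ∀ (V : Type) [Fintype V] (G : SimpleGraph V),
        Fintype.card V = n →
        (∀ v : V, (1 - 1 / (2 * (Δ : ℝ)) + γ) * n ≤ ((G.neighborSet v).ncard : ℝ)) →
      ∀ (W : Type) [Fintype W] (H : SimpleGraph W) (C D : Set W),
        Fintype.card W = n →
        C ∪ D = Set.univ → Disjoint C D → C.ncard = n / 2 → D.ncard = n / 2 →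
        (∀ u w : W, H.Adj u w → (u ∈ C ∧ w ∈ D) ∨ (u ∈ D ∧ w ∈ C)) →
        (∀ w : W, (H.neighborSet w).ncard ≤ Δ) →
      ∀ χ : Sym2 V → ℕ,
        (∀ e ∈ G.edgeSet, ∀ f ∈ G.edgeSet, e ≠ f → (∃ v : V, v ∈ e ∧ v ∈ f) → χ e ≠ χ f) →
        (∀ c : ℕ, (({e : Sym2 V | e ∈ G.edgeSet ∧ χ e = c}).ncard : ℝ) ≤ μ * n / (Δ : ℝ) ^ 2) →
        ∃ φ : W → V, Function.Injective φ ∧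
          (∀ u w : W, H.Adj u w → G.Adj (φ u) (φ w)) ∧
          (∀ e ∈ H.edgeSet, ∀ f ∈ H.edgeSet, χ (e.map φ) = χ (f.map φ) → e = f) := by
  intro γ hγ
  refine ⟨γ ^ 4 / 128, by positivity, fun Δ => ⟨⌈5 / γ⌉₊, ?_⟩⟩
  rintro _ hn - V _ G rfl hG W _ H _ _ hcard - - - - - hH χ hχ hK
  obtain ⟨φ, hφ, hrainbow⟩ := rainbow_bounded_degree_bipartite_embedding_general hγ
    ((div_le_iff₀' hγ).1 (Nat.ceil_le.1 hn)) hcard hG hH hχ hK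
  exact ⟨φ, φ.injective, fun _ _ h => hφ h, fun _ he _ hf h => hrainbow he hf h⟩
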